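/- Fix real α, β > −1, j ∈ ℕ, γ ∈ ℝ, M > 0, and a sequence M_n ≥ 0 with lim_{n→∞} M_n n^γ = M. If γ < 2(α+2j+1), then for every fixed k ∈ ℕ, lim_{n→∞} Q_n^{(k)}(1)/(P_n^{(α,β)})^{(k)}(1) = (k−j)/(α+j+k+1). -/

import Mathlib

open Polynomial Filter

/-- The Jacobi polynomial `P_n^{(α,β)}` as a real polynomial. -/
noncomputable def jacobiP (α β : ℝ) (n : ℕ) : Polynomial ℝ :=
  ∑ k ∈ Finset.range (n + 1),
    Polynomial.C (Real.Gamma (n + α + 1) / (Real.Gamma ((n : ℝ) - k + 1) * Real.Gamma (α + k + 1)) *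
        (Real.Gamma (n + β + 1) / (Real.Gamma ((k : ℝ) + 1) * Real.Gamma ((n : ℝ) - k + β + 1)))) *
      (Polynomial.C (2⁻¹ : ℝ) * (Polynomial.X - 1)) ^ k *
      (Polynomial.C (2⁻¹ : ℝ) * (Polynomial.X + 1)) ^ (n - k)

/-- The squared Jacobi norm `‖P_n^{(α,β)}‖²`. -/
noncomputable def jacobiNormSq (α β : ℝ) (n : ℕ) : ℝ :=
  ∫ x in (-1 : ℝ)..1, (jacobiP α β n).eval x ^ 2 * (1 - x) ^ α * (1 + x) ^ β

/-- The kernel `K_n^{(j,k)}(x,y)`. -/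
noncomputable def kernK (α β : ℝ) (j k n : ℕ) (x y : ℝ) : ℝ :=
  ∑ i ∈ Finset.range (n + 1),
    (Polynomial.derivative^[j] (jacobiP α β i)).eval x *
      (Polynomial.derivative^[k] (jacobiP α β i)).eval y / jacobiNormSq α β i

/-- The kernel `K_n^{(j,0)}(1,·)` as a polynomial. -/
noncomputable def kernKPoly (α β : ℝ) (j n : ℕ) : Polynomial ℝ :=
  ∑ i ∈ Finset.range (n + 1),
    Polynomial.C ((Polynomial.derivative^[j] (jacobiP α β i)).eval 1 / jacobiNormSq α β i) *
      jacobiP α β i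

/-- The varying Sobolev inner product `(f,g)_{S,n}` with mass `m`. -/
noncomputable def sobInner (α β : ℝ) (j : ℕ) (m : ℝ) (f g : Polynomial ℝ) : ℝ :=
  (∫ x in (-1 : ℝ)..1, f.eval x * g.eval x * (1 - x) ^ α * (1 + x) ^ β) +
    m * (Polynomial.derivative^[j] f).eval 1 * (Polynomial.derivative^[j] g).eval 1

/-- The Jacobi–Sobolev orthogonal polynomial `Q_n`. -/
noncomputable def sobQ (α β : ℝ) (j : ℕ) (Ms : ℕ → ℝ) (n : ℕ) : Polynomial ℝ :=
  jacobiP α β n -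
    Polynomial.C (Ms n * (Polynomial.derivative^[j] (jacobiP α β n)).eval 1 /
        (1 + Ms n * kernK α β j j (n - 1) 1 1)) *
      kernKPoly α β j (n - 1)

/-!
Write `D_i = P_n^{(i)}(1)` and `K_{ji} = K_{n-1}^{(j,i)}(1,1)`. Then
`Q_n^{(k)}(1) / P_n^{(k)}(1) = 1 - M_n K_{jj} / (1 + M_n K_{jj}) * (D_j K_{jk} / (K_{jj} D_k))`,
so only the orders of growth of `D_i` and `K_{ji}` matter. By the Chu–Vandermonde identity the
Taylor coefficients of `P_n` at `1` are products of two binomial coefficients, whence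
`D_i ~ d_i n ^ (α + 2 i)`. Integrating `P_n (x - 1) ^ m` termwise with the beta integral leaves an
`n`-th finite difference of a polynomial of degree `m`; this gives orthogonality and the norm,
`‖P_n‖² ~ 2 ^ (α + β) / n`. Summation then yields
`K_{ji} ~ d_j d_i / (2 ^ (α + β) * 2 (α + j + i + 1)) * n ^ (2 (α + j + i + 1))`. Consequently
`M_n K_{jj} → ∞`, the first factor tends to `1`, and the second to
`(α + 2 j + 1) / (α + j + k + 1)`.
-/

section

open Asymptotics Finset
open scoped Nat Topology

/-! ### Gamma quotients and binomial coefficients -/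

lemma Gamma_add_natCast {x : ℝ} (hx : 0 < x) (n : ℕ) :
    Real.Gamma (x + n) = (ascPochhammer ℝ n).eval x * Real.Gamma x := by
  induction n with
  | zero => simp
  | succ n ih =>
    rw [Nat.cast_succ, ← add_assoc, Real.Gamma_add_one (by positivity), ih,
      ascPochhammer_succ_eval]
    ring

lemma Gamma_add_one_eq_choose_mul {x : ℝ} {k : ℕ} (h : 0 < x - k + 1) :
    Real.Gamma (x + 1) = k ! * Ring.choose x k * Real.Gamma (x - k + 1) := by
  rw [Ring.choose, ← nsmul_eq_mul, Ring.factorial_nsmul_multichoose_eq_ascPochhammer,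
    ascPochhammer_smeval_eq_eval, ← Gamma_add_natCast h]
  congr 1
  ring

lemma choose_eq_Gamma_div {x : ℝ} {k : ℕ} (h : 0 < x - k + 1) :
    Ring.choose x k = Real.Gamma (x + 1) / (k ! * Real.Gamma (x - k + 1)) := by
  have := Real.Gamma_pos_of_pos h
  rw [Gamma_add_one_eq_choose_mul h]
  field_simp

lemma prod_range_add_natCast {R : Type*} [CommSemiring R] (a : R) (n : ℕ) :
    ∏ i ∈ range n, (a + i) = (ascPochhammer R n).eval a := by
  induction n with
  | zero => simp
  | succ n ih => rw [prod_range_succ, ih, ascPochhammer_succ_eval]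

lemma isEquivalent_Gamma_natCast_add_of_pos {a : ℝ} (ha : 0 < a) :
    (fun n : ℕ ↦ Real.Gamma (n + a + 1)) ~[atTop] fun n ↦ n ! * (n : ℝ) ^ a := by
  have hΓ : 0 < Real.Gamma a := Real.Gamma_pos_of_pos ha
  have hseq : Real.GammaSeq a ~[atTop] fun _ ↦ Real.Gamma a :=
    (isEquivalent_const_iff_tendsto hΓ.ne').2 (Real.GammaSeq_tendsto_Gamma a)
  have hGamma (n : ℕ) :
      Real.Gamma (n + a + 1) = (∏ i ∈ range (n + 1), (a + i)) * Real.Gamma a := by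
    rw [prod_range_add_natCast, ← Gamma_add_natCast ha]
    congr 1
    push_cast
    ring
  refine (((IsEquivalent.refl (u := fun n : ℕ ↦ n ! * (n : ℝ) ^ a)).div hseq).mul
    (IsEquivalent.refl (u := fun _ ↦ Real.Gamma a))).congr_left ?_ |>.congr_right ?_
  · filter_upwards [eventually_gt_atTop 0] with n hn
    have : 0 < ∏ i ∈ range (n + 1), (a + i) := prod_pos fun i _ ↦ by positivity
    simp only [Pi.mul_apply, Pi.div_apply, hGamma, Real.GammaSeq]
    field_simp
  · exact .of_forall fun n ↦ div_mul_cancel₀ _ hΓ.ne'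

lemma isEquivalent_Gamma_natCast_add (a : ℝ) :
    (fun n : ℕ ↦ Real.Gamma (n + a + 1)) ~[atTop] fun n ↦ n ! * (n : ℝ) ^ a := by
  suffices h : ∀ (N : ℕ) (a : ℝ), 0 < a + N →
      (fun n : ℕ ↦ Real.Gamma (n + a + 1)) ~[atTop] fun n ↦ n ! * (n : ℝ) ^ a by
    obtain ⟨N, hN⟩ := exists_nat_gt (-a)
    exact h N a (by linarith)
  intro N
  induction N with
  | zero => exact fun a ha ↦ isEquivalent_Gamma_natCast_add_of_pos (by simpa using ha)
  | succ N ih =>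
    intro a ha
    have hshift := ih (a + 1) (by push_cast at ha; linarith)
    have hlin : (fun n : ℕ ↦ (n : ℝ) + (a + 1)) ~[atTop] fun n ↦ (n : ℝ) :=
      IsEquivalent.refl.add_isLittleO
        (isLittleO_const_id_atTop (a + 1) |>.comp_tendsto tendsto_natCast_atTop_atTop)
    refine (hshift.div hlin).congr_left ?_ |>.congr_right ?_
    · filter_upwards [tendsto_natCast_atTop_atTop.eventually_gt_atTop (-(a + 1))] with n hn
      have hn' : (n : ℝ) + (a + 1) ≠ 0 := by linarith
      rw [Pi.div_apply, Real.Gamma_add_one hn', mul_div_cancel_left₀ _ hn', ← add_assoc]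
    · filter_upwards [eventually_ne_atTop 0] with n hn
      have hn' : (n : ℝ) ≠ 0 := by exact_mod_cast hn
      rw [Pi.div_apply, Real.rpow_add_one hn', ← mul_assoc, mul_div_cancel_right₀ _ hn']

lemma isEquivalent_Gamma_div_Gamma (a b : ℝ) :
    (fun n : ℕ ↦ Real.Gamma (n + a + 1) / Real.Gamma (n + b + 1)) ~[atTop]
      fun n ↦ (n : ℝ) ^ (a - b) := by
  refine ((isEquivalent_Gamma_natCast_add a).div (isEquivalent_Gamma_natCast_add b)).congr_right ?_
  filter_upwards [eventually_gt_atTop 0] with n hn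
  rw [Pi.div_apply, Real.rpow_sub (by exact_mod_cast hn),
    mul_div_mul_left _ _ (by exact_mod_cast n.factorial_ne_zero)]

/-! ### Sums of powers -/

lemma isEquivalent_succ_rpow_sub_rpow {p : ℝ} (hp : p ≠ 0) :
    (fun n : ℕ ↦ ((n + 1 : ℕ) : ℝ) ^ p - (n : ℝ) ^ p) ~[atTop] fun n ↦ p * (n : ℝ) ^ (p - 1) := by
  have hderiv : HasDerivAt (fun x : ℝ ↦ x ^ p) p 1 := by
    simpa using Real.hasDerivAt_rpow_const (x := 1) (p := p) (Or.inl one_ne_zero)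
  have hinv : Tendsto (fun n : ℕ ↦ (n : ℝ)⁻¹) atTop (𝓝[≠] 0) :=
    tendsto_nhdsWithin_iff.2 ⟨tendsto_inv_atTop_nhds_zero_nat,
      (eventually_ne_atTop 0).mono fun n hn ↦ by simpa using hn⟩
  have hslope := (isEquivalent_const_iff_tendsto hp).2 (hderiv.tendsto_slope_zero.comp hinv)
  refine (hslope.mul (IsEquivalent.refl (u := fun n : ℕ ↦ (n : ℝ) ^ (p - 1)))).congr_left ?_
  filter_upwards [eventually_gt_atTop 0] with n hn
  have hn' : (0 : ℝ) < n := by exact_mod_cast hn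
  have hsucc : ((n + 1 : ℕ) : ℝ) = n * (1 + (n : ℝ)⁻¹) := by push_cast; field_simp
  simp only [Pi.mul_apply, Function.comp_apply, inv_inv, smul_eq_mul, Real.one_rpow]
  rw [hsucc, Real.mul_rpow hn'.le (by positivity), Real.rpow_sub_one hn'.ne']
  field_simp

lemma isEquivalent_sum_range {f g : ℕ → ℝ} {c : ℝ} (hc : c ≠ 0)
    (hfg : f ~[atTop] fun n ↦ c * g n) (hg : 0 ≤ g)
    (hsum : Tendsto (fun n ↦ ∑ i ∈ range n, g i) atTop atTop) :
    (fun n ↦ ∑ i ∈ range n, f i) ~[atTop] fun n ↦ c * ∑ i ∈ range n, g i := by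
  have hdiff : (fun n ↦ f n - c * g n) =o[atTop] g :=
    (isLittleO_const_mul_right_iff hc).1 hfg.isLittleO
  have hsum_diff := hdiff.sum_range hg hsum
  simp only [sum_sub_distrib, ← mul_sum] at hsum_diff
  exact (isLittleO_const_mul_right_iff hc).2 hsum_diff

lemma isEquivalent_sum_range_of_isEquivalent_rpow {f : ℕ → ℝ} {c p : ℝ} (hc : c ≠ 0) (hp : 0 < p)
    (hf : f ~[atTop] fun n ↦ c * (n : ℝ) ^ (p - 1)) :
    (fun n ↦ ∑ i ∈ range n, f i) ~[atTop] fun n ↦ c / p * (n : ℝ) ^ p := by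
  have htelescope (n : ℕ) :
      ∑ i ∈ range n, (((i + 1 : ℕ) : ℝ) ^ p - (i : ℝ) ^ p) = (n : ℝ) ^ p := by
    rw [sum_range_sub (fun i : ℕ ↦ (i : ℝ) ^ p)]
    simp [Real.zero_rpow hp.ne']
  have hincr : f ~[atTop] fun n ↦ c / p * (((n + 1 : ℕ) : ℝ) ^ p - (n : ℝ) ^ p) := by
    refine hf.trans ?_
    refine ((IsEquivalent.refl (u := fun _ ↦ c / p)).mul
      (isEquivalent_succ_rpow_sub_rpow hp.ne').symm).congr_left (.of_forall fun n ↦ ?_)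
    simp only [Pi.mul_apply]
    field_simp
  simpa only [htelescope] using isEquivalent_sum_range (div_ne_zero hc hp.ne') hincr
    (fun i ↦ sub_nonneg.2 (Real.rpow_le_rpow i.cast_nonneg (by simp) hp.le))
    (by simpa only [htelescope, Function.comp_def] using
      (tendsto_rpow_atTop hp).comp tendsto_natCast_atTop_atTop)

/-! ### Finite differences of polynomials -/

lemma sum_neg_one_pow_mul_choose_mul_eval {R : Type*} [CommRing R] {p : R[X]} {n : ℕ}
    (hp : p.natDegree ≤ n) (y : R) :
    ∑ k ∈ range (n + 1), (-1) ^ k * n.choose k * p.eval (y + k) = (-1) ^ n * n ! * p.coeff n := by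
  have hdiff : (fwdDiff (1 : R))^[n] p.eval y = n ! * p.coeff n := by
    rcases hp.eq_or_lt with rfl | hlt
    · have := congrFun (fwdDiff_iter_degree_eq_factorial p) y
      simpa [mul_comm] using this
    · simpa [coeff_eq_zero_of_natDegree_lt hlt] using
        congrFun (fwdDiff_iter_eq_zero_of_degree_lt hlt) y
  rw [mul_assoc, ← hdiff, fwdDiff_iter_eq_sum_shift, mul_sum]
  refine sum_congr rfl fun k hk ↦ ?_
  have hsign : (-1 : R) ^ k = (-1) ^ n * (-1) ^ (n - k) := by
    have := mem_range_succ_iff.1 hk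
    rw [← pow_add, show n + (n - k) = 2 * (n - k) + k by lia, pow_add, pow_mul, neg_one_sq,
      one_pow, one_mul]
  simp [hsign, mul_assoc]

/-! ### Integrals against the Jacobi weight -/

lemma ofReal_rpow_mul_one_sub_rpow (a b : ℝ) {t : ℝ} (ht : t ∈ Set.Icc (0 : ℝ) 1) :
    ((t ^ (a - 1) * (1 - t) ^ (b - 1) : ℝ) : ℂ) =
      (t : ℂ) ^ ((a : ℂ) - 1) * (1 - t) ^ ((b : ℂ) - 1) := by
  rw [Complex.ofReal_mul, Complex.ofReal_cpow ht.1, Complex.ofReal_cpow (sub_nonneg.2 ht.2)]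
  push_cast
  rfl

lemma intervalIntegrable_rpow_mul_one_sub_rpow {a b : ℝ} (ha : 0 < a) (hb : 0 < b) :
    IntervalIntegrable (fun t : ℝ ↦ t ^ (a - 1) * (1 - t) ^ (b - 1)) MeasureTheory.volume 0 1 := by
  have hconv := Complex.betaIntegral_convergent (u := a) (v := b) (by simpa) (by simpa)
  rw [intervalIntegrable_iff] at hconv ⊢
  refine MeasureTheory.IntegrableOn.congr_fun hconv.re (fun t ht ↦ ?_) measurableSet_uIoc
  rw [Set.uIoc_of_le zero_le_one] at ht
  simp [← ofReal_rpow_mul_one_sub_rpow a b (Set.Ioc_subset_Icc_self ht)]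

lemma integral_rpow_mul_one_sub_rpow {a b : ℝ} (ha : 0 < a) (hb : 0 < b) :
    ∫ t in (0 : ℝ)..1, t ^ (a - 1) * (1 - t) ^ (b - 1) = ProbabilityTheory.beta a b := by
  rw [ProbabilityTheory.beta_eq_betaIntegralReal a b ha hb, Complex.betaIntegral,
    ← Complex.ofReal_re (∫ t in (0 : ℝ)..1, _), ← intervalIntegral.integral_ofReal]
  congr 1
  refine intervalIntegral.integral_congr fun t ht ↦ ?_
  rw [Set.uIcc_of_le zero_le_one] at ht
  exact ofReal_rpow_mul_one_sub_rpow a b ht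

/-- The integral of a polynomial against the Jacobi weight `(1 - x) ^ α * (1 + x) ^ β`. -/
noncomputable def jacobiIntegral (α β : ℝ) (f : ℝ[X]) : ℝ :=
  ∫ x in (-1 : ℝ)..1, f.eval x * ((1 - x) ^ α * (1 + x) ^ β)

lemma jacobiIntegral_eq_integral_zero_one (α β : ℝ) (f : ℝ[X]) :
    jacobiIntegral α β f =
      2 ^ (α + β + 1) * ∫ t in (0 : ℝ)..1, f.eval (1 - 2 * t) * (t ^ α * (1 - t) ^ β) := by
  have hsubst := intervalIntegral.smul_integral_comp_sub_mul (a := 0) (b := 1)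
    (fun x : ℝ ↦ f.eval x * ((1 - x) ^ α * (1 + x) ^ β)) 2 1
  norm_num only [smul_eq_mul] at hsubst
  rw [jacobiIntegral, ← hsubst, Real.rpow_add_one two_ne_zero, mul_comm (_ ^ _), mul_assoc,
    ← intervalIntegral.integral_const_mul (2 ^ (α + β))]
  congr 1
  refine intervalIntegral.integral_congr fun t ht ↦ ?_
  rw [Set.uIcc_of_le zero_le_one] at ht
  rw [show 1 - (1 - 2 * t) = 2 * t by ring, show 1 + (1 - 2 * t) = 2 * (1 - t) by ring,
    Real.mul_rpow zero_le_two ht.1, Real.mul_rpow zero_le_two (sub_nonneg.2 ht.2),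
    Real.rpow_add zero_lt_two]
  ring

lemma jacobiIntegral_sum {α β : ℝ} (hα : -1 < α) (hβ : -1 < β) {ι : Type*} (s : Finset ι)
    (c : ι → ℝ) (f : ι → ℝ[X]) :
    jacobiIntegral α β (∑ i ∈ s, C (c i) * f i) = ∑ i ∈ s, c i * jacobiIntegral α β (f i) := by
  have hweight : IntervalIntegrable (fun t : ℝ ↦ t ^ α * (1 - t) ^ β) MeasureTheory.volume 0 1 := by
    simpa using intervalIntegrable_rpow_mul_one_sub_rpow (a := α + 1) (b := β + 1)
      (by linarith) (by linarith)
  have hint (i : ι) : IntervalIntegrable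
      (fun t : ℝ ↦ c i * ((f i).eval (1 - 2 * t) * (t ^ α * (1 - t) ^ β)))
      MeasureTheory.volume 0 1 :=
    (hweight.continuousOn_mul (by fun_prop)).const_mul _
  simp only [jacobiIntegral_eq_integral_zero_one, mul_left_comm (c _), ← mul_sum]
  simp only [← intervalIntegral.integral_const_mul (c _)]
  rw [← intervalIntegral.integral_finsetSum fun i _ ↦ hint i]
  simp only [eval_finsetSum, eval_mul, eval_C, sum_mul, mul_assoc]

/-- The affine coordinate `w = (x - 1) / 2` vanishing at the endpoint `1`; since
`w + 1 = (x + 1) / 2`, the Jacobi polynomial of degree `n` is homogeneous of degree `n` in `w` and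
`w + 1`. -/
noncomputable def endpointCoord : ℝ[X] := C 2⁻¹ * (X - 1)

lemma endpointCoord_add_one : endpointCoord + 1 = C 2⁻¹ * (X + 1) := by
  have : (1 : ℝ[X]) = C 2⁻¹ * 2 := by
    rw [← C_ofNat, ← C_mul, inv_mul_cancel₀ two_ne_zero, C_1]
  rw [endpointCoord]
  linear_combination this

lemma jacobiIntegral_endpointCoord_pow_mul {α β : ℝ} (hα : -1 < α) (hβ : -1 < β) (p q : ℕ) :
    jacobiIntegral α β (endpointCoord ^ p * (endpointCoord + 1) ^ q) =
      (-1) ^ p * 2 ^ (α + β + 1) * ProbabilityTheory.beta (α + p + 1) (β + q + 1) := by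
  have hp : 0 < α + p + 1 := by linarith [p.cast_nonneg (α := ℝ)]
  have hq : 0 < β + q + 1 := by linarith [q.cast_nonneg (α := ℝ)]
  rw [jacobiIntegral_eq_integral_zero_one, ← integral_rpow_mul_one_sub_rpow hp hq,
    mul_comm ((-1) ^ p), mul_assoc, ← intervalIntegral.integral_const_mul ((-1) ^ p)]
  congr 1
  refine intervalIntegral.integral_congr_Ioo_of_le zero_le_one fun t ht ↦ ?_
  have heval : endpointCoord.eval (1 - 2 * t) = -1 * t := by simp [endpointCoord]
  have heval_add : (endpointCoord + 1).eval (1 - 2 * t) = 1 - t := by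
    rw [eval_add, heval, eval_one]
    ring
  rw [eval_mul, eval_pow, eval_pow, heval, heval_add, mul_pow, add_sub_cancel_right,
    add_sub_cancel_right, Real.rpow_add ht.1, Real.rpow_add (sub_pos.2 ht.2), Real.rpow_natCast,
    Real.rpow_natCast]
  ring

/-! ### Jacobi polynomials at the endpoint `1` -/

lemma choose_mul_natCast_choose {R : Type*} [CommRing R] [BinomialRing R] (a : R) {n m k : ℕ}
    (hm : m ≤ n) (hk : k ≤ m) :
    Ring.choose a (n - k) * (n - k).choose (m - k) =
      Ring.choose a (n - m) * Ring.choose (a - (n - m : ℕ)) (m - k) := by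
  have hle : n - m ≤ n - k := by lia
  have hsub : n - k - (n - m) = m - k := by lia
  have hchoose := Ring.choose_smul_choose a hle
  rwa [hsub, nsmul_eq_mul, ← Nat.choose_symm hle, hsub, mul_comm] at hchoose

lemma sum_choose_mul_choose_mul_pow {R : Type*} [CommRing R] [BinomialRing R] (a b : R) (w : R[X])
    (n : ℕ) :
    ∑ k ∈ range (n + 1), C (Ring.choose a (n - k) * Ring.choose b k) * (w ^ k * (w + 1) ^ (n - k)) =
      ∑ m ∈ range (n + 1),
        C (Ring.choose a (n - m) * Ring.choose (a - (n - m : ℕ) + b) m) * w ^ m := by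
  have hexpand (k : ℕ) (hk : k ∈ range (n + 1)) :
      C (Ring.choose a (n - k) * Ring.choose b k) * (w ^ k * (w + 1) ^ (n - k)) =
        ∑ m ∈ Ico k (n + 1),
          C (Ring.choose a (n - k) * (n - k).choose (m - k) * Ring.choose b k) * w ^ m := by
    have := mem_range_succ_iff.1 hk
    rw [add_pow, sum_Ico_eq_sum_range, show n + 1 - k = n - k + 1 by lia, mul_sum, mul_sum]
    refine sum_congr rfl fun l _ ↦ ?_
    simp only [one_pow, Nat.add_sub_cancel_left, C_mul, map_natCast, pow_add]
    ring
  rw [sum_congr rfl hexpand, sum_comm' (t' := range (n + 1)) (s' := fun m ↦ range (m + 1))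
    (by simp only [mem_range, mem_Ico]; lia)]
  refine sum_congr rfl fun m hm ↦ ?_
  have hm' := mem_range_succ_iff.1 hm
  rw [← sum_mul, ← map_sum, add_comm _ b, Ring.add_choose_eq m (Commute.all _ _),
    Nat.sum_antidiagonal_eq_sum_range_succ_mk, mul_sum]
  congr 2
  refine sum_congr rfl fun k hk ↦ ?_
  rw [choose_mul_natCast_choose a hm' (mem_range_succ_iff.1 hk)]
  ring

variable {α β : ℝ}

lemma jacobiP_eq_sum_choose (hα : -1 < α) (hβ : -1 < β) (n : ℕ) :
    jacobiP α β n = ∑ k ∈ range (n + 1),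
      C (Ring.choose (n + α) (n - k) * Ring.choose (n + β) k) *
        (endpointCoord ^ k * (endpointCoord + 1) ^ (n - k)) := by
  refine sum_congr rfl fun k hk ↦ ?_
  have hk' := mem_range_succ_iff.1 hk
  have hnk : ((n - k : ℕ) : ℝ) = n - k := Nat.cast_sub hk'
  rw [endpointCoord_add_one, endpointCoord, mul_assoc,
    choose_eq_Gamma_div (x := n + α) (k := n - k) (by rw [hnk]; linarith [k.cast_nonneg (α := ℝ)]),
    choose_eq_Gamma_div (x := n + β) (k := k) (by linarith [(n - k).cast_nonneg (α := ℝ)]),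
    ← Real.Gamma_nat_eq_factorial (n - k), ← Real.Gamma_nat_eq_factorial k, hnk,
    show (n : ℝ) + α - (n - k) + 1 = α + k + 1 by ring,
    show (n : ℝ) + β - k + 1 = n - k + β + 1 by ring]

lemma jacobiP_eq_sum_endpointCoord_pow (hα : -1 < α) (hβ : -1 < β) (n : ℕ) :
    jacobiP α β n = ∑ m ∈ range (n + 1),
      C (Ring.choose (n + α) (n - m) * Ring.choose (n + m + α + β) m) * endpointCoord ^ m := by
  rw [jacobiP_eq_sum_choose hα hβ, sum_choose_mul_choose_mul_pow]
  refine sum_congr rfl fun m hm ↦ ?_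
  rw [Nat.cast_sub (mem_range_succ_iff.1 hm),
    show (n : ℝ) + α - (n - m) + (n + β) = n + m + α + β by ring]

lemma eval_one_iterate_derivative_endpointCoord_pow (k m : ℕ) :
    (derivative^[k] (endpointCoord ^ m)).eval 1 = if m = k then (k ! / 2 ^ k : ℝ) else 0 := by
  rw [endpointCoord, mul_pow, ← C_pow, iterate_derivative_C_mul, ← C_1,
    iterate_derivative_X_sub_pow]
  split_ifs with hmk
  · simp [hmk, Nat.descFactorial_self, div_eq_inv_mul]
  · rcases lt_or_gt_of_ne hmk with hlt | hgt
    · simp [Nat.descFactorial_of_lt hlt]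
    · simp [(Nat.sub_pos_of_lt hgt).ne']

lemma eval_one_iterate_derivative_jacobiP (hα : -1 < α) (hβ : -1 < β) {n k : ℕ} (hk : k ≤ n) :
    (derivative^[k] (jacobiP α β n)).eval 1 =
      Ring.choose (n + α) (n - k) * Ring.choose (n + k + α + β) k * (k ! / 2 ^ k) := by
  simp only [jacobiP_eq_sum_endpointCoord_pow hα hβ, iterate_derivative_sum,
    iterate_derivative_C_mul, eval_finsetSum, eval_mul, eval_C,
    eval_one_iterate_derivative_endpointCoord_pow, mul_ite, mul_zero, sum_ite_eq',
    mem_range_succ_iff, hk, if_true]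

/-! ### The norm of the Jacobi polynomials -/

lemma jacobiIntegral_jacobiP_mul_endpointCoord_pow (hα : -1 < α) (hβ : -1 < β) {n m : ℕ}
    (hm : m ≤ n) :
    jacobiIntegral α β (jacobiP α β n * endpointCoord ^ m) =
      (-1) ^ (n + m) * (ascPochhammer ℝ m).coeff n * 2 ^ (α + β + 1) * Real.Gamma (n + α + 1) *
        Real.Gamma (n + β + 1) / Real.Gamma (α + β + n + m + 2) := by
  have hexpand : jacobiP α β n * endpointCoord ^ m = ∑ k ∈ range (n + 1),
      C (Ring.choose (n + α) (n - k) * Ring.choose (n + β) k) *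
        (endpointCoord ^ (k + m) * (endpointCoord + 1) ^ (n - k)) := by
    rw [jacobiP_eq_sum_choose hα hβ, sum_mul]
    exact sum_congr rfl fun k _ ↦ by ring
  have hterm (k : ℕ) (hk : k ∈ range (n + 1)) :
      Ring.choose (n + α) (n - k) * Ring.choose (n + β) k *
        jacobiIntegral α β (endpointCoord ^ (k + m) * (endpointCoord + 1) ^ (n - k)) =
      (-1) ^ m * 2 ^ (α + β + 1) * Real.Gamma (n + α + 1) * Real.Gamma (n + β + 1) /
          (n ! * Real.Gamma (α + β + n + m + 2)) *
        ((-1) ^ k * n.choose k * (ascPochhammer ℝ m).eval (α + 1 + k)) := by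
    have hk' := mem_range_succ_iff.1 hk
    have hnk : ((n - k : ℕ) : ℝ) = n - k := Nat.cast_sub hk'
    have hα' : 0 < α + 1 + k := by linarith [k.cast_nonneg (α := ℝ)]
    have hβ' : 0 < n + β - k + 1 := by linarith [(n - k).cast_nonneg (α := ℝ)]
    have := Real.Gamma_pos_of_pos hα'
    have := Real.Gamma_pos_of_pos hβ'
    rw [jacobiIntegral_endpointCoord_pow_mul hα hβ, ProbabilityTheory.beta, choose_eq_Gamma_div hβ',
      choose_eq_Gamma_div (by rw [hnk]; linarith), Nat.cast_choose ℝ hk', hnk,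
      show (n : ℝ) + α - (n - k) + 1 = α + 1 + k by ring,
      show α + (k + m : ℕ) + 1 = α + 1 + k + m by push_cast; ring, Gamma_add_natCast hα',
      show β + (n - k) + 1 = (n : ℝ) + β - k + 1 by ring,
      show α + 1 + k + m + (n + β - k + 1) = α + β + n + m + 2 by ring]
    field_simp
    ring
  rw [hexpand, jacobiIntegral_sum hα hβ, sum_congr rfl hterm, ← mul_sum,
    sum_neg_one_pow_mul_choose_mul_eval (by rwa [ascPochhammer_natDegree])]
  field_simp
  ring

lemma jacobiIntegral_jacobiP_mul_endpointCoord_pow_of_lt (hα : -1 < α) (hβ : -1 < β) {n m : ℕ}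
    (hm : m < n) : jacobiIntegral α β (jacobiP α β n * endpointCoord ^ m) = 0 := by
  have hcoeff : (ascPochhammer ℝ m).coeff n = 0 :=
    coeff_eq_zero_of_natDegree_lt (by rwa [ascPochhammer_natDegree])
  simp [jacobiIntegral_jacobiP_mul_endpointCoord_pow hα hβ hm.le, hcoeff]

lemma jacobiIntegral_jacobiP_mul_endpointCoord_pow_self (hα : -1 < α) (hβ : -1 < β) (n : ℕ) :
    jacobiIntegral α β (jacobiP α β n * endpointCoord ^ n) =
      2 ^ (α + β + 1) * ProbabilityTheory.beta (n + α + 1) (n + β + 1) := by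
  have hcoeff : (ascPochhammer ℝ n).coeff n = 1 := by
    simpa [ascPochhammer_natDegree] using (monic_ascPochhammer ℝ n).coeff_natDegree
  rw [jacobiIntegral_jacobiP_mul_endpointCoord_pow hα hβ le_rfl, hcoeff, ← two_mul, pow_mul,
    neg_one_sq, one_pow, ProbabilityTheory.beta,
    show α + β + n + n + 2 = n + α + 1 + (n + β + 1) by ring]
  ring

lemma jacobiNormSq_eq (hα : -1 < α) (hβ : -1 < β) {n : ℕ} (hn : n ≠ 0) :
    jacobiNormSq α β n = 2 ^ (α + β + 1) / (2 * n + α + β + 1) *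
      (Real.Gamma (n + α + 1) * Real.Gamma (n + β + 1) / (n ! * Real.Gamma (n + (α + β) + 1))) := by
  have hsq : jacobiNormSq α β n = jacobiIntegral α β (jacobiP α β n * jacobiP α β n) := by
    simp only [jacobiNormSq, jacobiIntegral, eval_mul, pow_two, mul_assoc]
  have hexpand : jacobiP α β n * jacobiP α β n = ∑ m ∈ range (n + 1),
      C (Ring.choose (n + α) (n - m) * Ring.choose (n + m + α + β) m) *
        (jacobiP α β n * endpointCoord ^ m) := by
    nth_rw 2 [jacobiP_eq_sum_endpointCoord_pow hα hβ]
    simp only [mul_sum, mul_left_comm (jacobiP α β n)]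
  have hn' : (1 : ℝ) ≤ n := by exact_mod_cast hn.bot_lt
  have hpos : 0 < 2 * n + α + β + 1 := by linarith
  have hchoose : 0 < n + n + α + β - n + 1 := by linarith
  have := Real.Gamma_pos_of_pos hpos
  rw [hsq, hexpand, jacobiIntegral_sum hα hβ, sum_range_succ, sum_eq_zero fun m hm ↦ by
      rw [jacobiIntegral_jacobiP_mul_endpointCoord_pow_of_lt hα hβ (mem_range.1 hm), mul_zero],
    zero_add, jacobiIntegral_jacobiP_mul_endpointCoord_pow_self hα hβ, ProbabilityTheory.beta,
    choose_eq_Gamma_div hchoose, Nat.sub_self, Ring.choose_zero_right,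
    show (n : ℝ) + α + 1 + (n + β + 1) = 2 * n + α + β + 1 + 1 by ring,
    Real.Gamma_add_one hpos.ne',
    show (n : ℝ) + n + α + β - n + 1 = n + (α + β) + 1 by ring,
    show (n : ℝ) + n + α + β + 1 = 2 * n + α + β + 1 by ring]
  field_simp

/-! ### Asymptotics -/

/-- The leading coefficient of `n ↦ (P_n^{(α,β)})^{(k)}(1)`, in the sense that the latter is
equivalent to `jacobiDerivCoeff α k * n ^ (α + 2 * k)`. -/
noncomputable def jacobiDerivCoeff (α : ℝ) (k : ℕ) : ℝ := (2 ^ k * Real.Gamma (α + k + 1))⁻¹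

lemma jacobiDerivCoeff_pos (hα : -1 < α) (k : ℕ) : 0 < jacobiDerivCoeff α k := by
  have := Real.Gamma_pos_of_pos (s := α + k + 1) (by linarith [k.cast_nonneg (α := ℝ)])
  rw [jacobiDerivCoeff]
  positivity

lemma isEquivalent_eval_one_iterate_derivative_jacobiP (hα : -1 < α) (hβ : -1 < β) (k : ℕ) :
    (fun n : ℕ ↦ (derivative^[k] (jacobiP α β n)).eval 1) ~[atTop]
      fun n ↦ jacobiDerivCoeff α k * (n : ℝ) ^ (α + 2 * k) := by
  refine ((IsEquivalent.refl (u := fun _ : ℕ ↦ jacobiDerivCoeff α k)).mul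
    ((isEquivalent_Gamma_div_Gamma α (-k)).mul
      (isEquivalent_Gamma_div_Gamma (k + α + β) (α + β)))).congr_left ?_ |>.congr_right ?_
  · filter_upwards [eventually_ge_atTop k, eventually_ge_atTop 1] with n hk hn
    have hn' : (1 : ℝ) ≤ n := by exact_mod_cast hn
    have hnk : ((n - k : ℕ) : ℝ) = n - k := Nat.cast_sub hk
    rw [eval_one_iterate_derivative_jacobiP hα hβ hk,
      choose_eq_Gamma_div (by rw [hnk]; linarith [k.cast_nonneg (α := ℝ)]),
      choose_eq_Gamma_div (x := n + k + α + β) (by linarith), hnk,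
      ← Real.Gamma_nat_eq_factorial (n - k), hnk,
      show (n : ℝ) + α - (n - k) + 1 = α + k + 1 by ring,
      show (n : ℝ) + k + α + β - k + 1 = n + (α + β) + 1 by ring]
    simp only [Pi.mul_apply, jacobiDerivCoeff, ← sub_eq_add_neg, ← add_assoc]
    field_simp
  · filter_upwards [eventually_gt_atTop 0] with n hn
    simp only [Pi.mul_apply]
    rw [← Real.rpow_add (by exact_mod_cast hn)]
    congr 2
    ring

lemma isEquivalent_jacobiNormSq (hα : -1 < α) (hβ : -1 < β) :
    jacobiNormSq α β ~[atTop] fun n ↦ 2 ^ (α + β) * (n : ℝ)⁻¹ := by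
  have hlin : (fun n : ℕ ↦ 2 * (n : ℝ) + (α + β + 1)) ~[atTop] fun n ↦ 2 * (n : ℝ) :=
    IsEquivalent.refl.add_isLittleO ((isLittleO_const_mul_right_iff two_ne_zero).2
      ((isLittleO_const_id_atTop (α + β + 1)).comp_tendsto tendsto_natCast_atTop_atTop))
  refine (((IsEquivalent.refl (u := fun _ : ℕ ↦ (2 : ℝ) ^ (α + β + 1))).div hlin).mul
    ((isEquivalent_Gamma_div_Gamma α 0).mul
      (isEquivalent_Gamma_div_Gamma β (α + β)))).congr_left ?_ |>.congr_right ?_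
  · filter_upwards [eventually_ne_atTop 0] with n hn
    rw [jacobiNormSq_eq hα hβ hn, ← Real.Gamma_nat_eq_factorial]
    simp only [Pi.mul_apply, Pi.div_apply, div_mul_div_comm, add_zero, ← add_assoc]
  · filter_upwards [eventually_gt_atTop 0] with n hn
    have hn' : (0 : ℝ) < n := by exact_mod_cast hn
    have hpow : (n : ℝ) ^ (α - 0) * (n : ℝ) ^ (β - (α + β)) = 1 := by
      rw [← Real.rpow_add hn', show α - 0 + (β - (α + β)) = 0 by ring, Real.rpow_zero]
    simp only [Pi.mul_apply, Pi.div_apply, hpow]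
    rw [Real.rpow_add_one two_ne_zero]
    field_simp

lemma isEquivalent_kernK (hα : -1 < α) (hβ : -1 < β) (j k : ℕ) :
    (fun n ↦ kernK α β j k (n - 1) 1 1) ~[atTop] fun n ↦
      jacobiDerivCoeff α j * jacobiDerivCoeff α k / 2 ^ (α + β) / (2 * (α + j + k + 1)) *
        (n : ℝ) ^ (2 * (α + j + k + 1)) := by
  have hexp : 0 < 2 * (α + j + k + 1) := by
    linarith [j.cast_nonneg (α := ℝ), k.cast_nonneg (α := ℝ)]
  have hcoeff : jacobiDerivCoeff α j * jacobiDerivCoeff α k / 2 ^ (α + β) ≠ 0 := by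
    have := jacobiDerivCoeff_pos hα j
    have := jacobiDerivCoeff_pos hα k
    positivity
  refine (isEquivalent_sum_range_of_isEquivalent_rpow hcoeff hexp
    ((((isEquivalent_eval_one_iterate_derivative_jacobiP hα hβ j).mul
      (isEquivalent_eval_one_iterate_derivative_jacobiP hα hβ k)).div
      (isEquivalent_jacobiNormSq hα hβ)).congr_right ?_)).congr_left ?_
  · filter_upwards [eventually_gt_atTop 0] with n hn
    have hn' : (0 : ℝ) < n := by exact_mod_cast hn
    have hpow : (n : ℝ) ^ (2 * (α + j + k + 1) - 1) = n ^ (α + 2 * j) * n ^ (α + 2 * k) * n := by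
      rw [← Real.rpow_add hn', ← Real.rpow_add_one hn'.ne']
      congr 1
      ring
    simp only [Pi.mul_apply, Pi.div_apply, hpow]
    field_simp
  · filter_upwards [eventually_gt_atTop 0] with n hn
    simp only [kernK, Nat.sub_add_cancel hn]
    rfl

lemma tendsto_mul_kernK_atTop (hα : -1 < α) (hβ : -1 < β) {j : ℕ} {Ms : ℕ → ℝ}
    (hMs : Tendsto (fun n : ℕ ↦ Ms n * (n : ℝ) ^ (2 * (α + 2 * j + 1))) atTop atTop) :
    Tendsto (fun n ↦ Ms n * kernK α β j j (n - 1) 1 1) atTop atTop := by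
  have hpos : 0 < α + j + j + 1 := by linarith [j.cast_nonneg (α := ℝ)]
  have hcoeff : 0 < jacobiDerivCoeff α j * jacobiDerivCoeff α j / 2 ^ (α + β) /
      (2 * (α + j + j + 1)) := by
    have := jacobiDerivCoeff_pos hα j
    positivity
  refine (((IsEquivalent.refl (u := Ms)).mul (isEquivalent_kernK hα hβ j j)).congr_right
    (.of_forall fun n ↦ ?_)).symm.tendsto_atTop (hMs.const_mul_atTop hcoeff)
  rw [Pi.mul_apply, mul_left_comm, add_assoc α, ← two_mul]

lemma tendsto_iterate_derivative_jacobiP_mul_kernK_div (hα : -1 < α) (hβ : -1 < β) (j k : ℕ) :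
    Tendsto (fun n ↦ (derivative^[j] (jacobiP α β n)).eval 1 * kernK α β j k (n - 1) 1 1 /
        (kernK α β j j (n - 1) 1 1 * (derivative^[k] (jacobiP α β n)).eval 1)) atTop
      (𝓝 ((α + 2 * j + 1) / (α + j + k + 1))) := by
  have hequiv := ((isEquivalent_eval_one_iterate_derivative_jacobiP hα hβ j).mul
    (isEquivalent_kernK hα hβ j k)).div ((isEquivalent_kernK hα hβ j j).mul
      (isEquivalent_eval_one_iterate_derivative_jacobiP hα hβ k))
  refine (hequiv.congr_right ?_).symm.tendsto_nhds tendsto_const_nhds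
  filter_upwards [eventually_gt_atTop 0] with n hn
  have hn' : (0 : ℝ) < n := by exact_mod_cast hn
  have hpow : (n : ℝ) ^ (α + 2 * j) * (n : ℝ) ^ (2 * (α + j + k + 1)) =
      (n : ℝ) ^ (2 * (α + j + j + 1)) * (n : ℝ) ^ (α + 2 * k) := by
    rw [← Real.rpow_add hn', ← Real.rpow_add hn']
    congr 1
    ring
  have := jacobiDerivCoeff_pos hα j
  have := jacobiDerivCoeff_pos hα k
  have hjj : 0 < α + j + j + 1 := by linarith [j.cast_nonneg (α := ℝ)]
  have hjk : 0 < α + j + k + 1 := by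
    linarith [j.cast_nonneg (α := ℝ), k.cast_nonneg (α := ℝ)]
  simp only [Pi.mul_apply, Pi.div_apply]
  rw [mul_mul_mul_comm, mul_mul_mul_comm _ ((n : ℝ) ^ (2 * (α + j + j + 1))), hpow,
    two_mul (j : ℝ), ← add_assoc]
  field_simp

/-! ### Jacobi–Sobolev polynomials at the endpoint `1` -/

lemma eval_iterate_derivative_kernKPoly (α β : ℝ) (j k n : ℕ) (y : ℝ) :
    (derivative^[k] (kernKPoly α β j n)).eval y = kernK α β j k n 1 y := by
  simp only [kernKPoly, kernK, iterate_derivative_sum, iterate_derivative_C_mul, eval_finsetSum,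
    eval_mul, eval_C, div_mul_eq_mul_div]

lemma eval_one_iterate_derivative_sobQ_div (Ms : ℕ → ℝ) {j k n : ℕ}
    (hP : (derivative^[k] (jacobiP α β n)).eval 1 ≠ 0) (hK : kernK α β j j (n - 1) 1 1 ≠ 0) :
    (derivative^[k] (sobQ α β j Ms n)).eval 1 / (derivative^[k] (jacobiP α β n)).eval 1 =
      1 - Ms n * kernK α β j j (n - 1) 1 1 / (1 + Ms n * kernK α β j j (n - 1) 1 1) *
        ((derivative^[j] (jacobiP α β n)).eval 1 * kernK α β j k (n - 1) 1 1 /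
          (kernK α β j j (n - 1) 1 1 * (derivative^[k] (jacobiP α β n)).eval 1)) := by
  rw [sobQ, iterate_derivative_sub, iterate_derivative_C_mul, eval_sub, eval_mul, eval_C,
    eval_iterate_derivative_kernKPoly, sub_div, div_self hP]
  congr 1
  field_simp

lemma tendsto_div_one_add_self {ι : Type*} {l : Filter ι} {f : ι → ℝ} (hf : Tendsto f l atTop) :
    Tendsto (fun i ↦ f i / (1 + f i)) l (𝓝 1) := by
  have hlim := tendsto_const_nhds (x := (1 : ℝ)).sub
    (tendsto_atTop_add_const_left l (1 : ℝ) hf).inv_tendsto_atTop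
  rw [sub_zero] at hlim
  refine hlim.congr' ?_
  filter_upwards [hf.eventually_gt_atTop 0] with i hi
  rw [Pi.inv_apply]
  field_simp
  ring

lemma tendsto_mul_natCast_rpow_atTop {u : ℕ → ℝ} {c γ δ : ℝ} (hc : 0 < c)
    (hu : Tendsto (fun n : ℕ ↦ u n * (n : ℝ) ^ γ) atTop (𝓝 c)) (hγ : γ < δ) :
    Tendsto (fun n : ℕ ↦ u n * (n : ℝ) ^ δ) atTop atTop := by
  have hpow : Tendsto (fun n : ℕ ↦ (n : ℝ) ^ (δ - γ)) atTop atTop :=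
    (tendsto_rpow_atTop (sub_pos.2 hγ)).comp tendsto_natCast_atTop_atTop
  refine (hu.pos_mul_atTop hc hpow).congr' ?_
  filter_upwards [eventually_gt_atTop 0] with n hn
  rw [mul_assoc, ← Real.rpow_add (by exact_mod_cast hn), add_sub_cancel]

theorem sobQ_deriv_ratio_small_gamma_general (hα : -1 < α) (hβ : -1 < β) (j : ℕ) {Ms : ℕ → ℝ}
    (hMs : Tendsto (fun n : ℕ ↦ Ms n * (n : ℝ) ^ (2 * (α + 2 * j + 1))) atTop atTop) (k : ℕ) :
    Tendsto (fun n : ℕ ↦ (derivative^[k] (sobQ α β j Ms n)).eval 1 /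
        (derivative^[k] (jacobiP α β n)).eval 1)
      atTop (𝓝 ((k - j) / (α + j + k + 1))) := by
  have hjj : 0 < α + 2 * j + 1 := by linarith [j.cast_nonneg (α := ℝ)]
  have hjk : 0 < α + j + k + 1 := by linarith [j.cast_nonneg (α := ℝ), k.cast_nonneg (α := ℝ)]
  have hratio := tendsto_iterate_derivative_jacobiP_mul_kernK_div hα hβ j k
  have hmass := tendsto_div_one_add_self (tendsto_mul_kernK_atTop hα hβ hMs)
  have hlim : 1 - 1 * ((α + 2 * j + 1) / (α + j + k + 1)) = (k - j) / (α + j + k + 1) := by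
    field_simp
    ring
  rw [← hlim]
  refine (tendsto_const_nhds.sub (hmass.mul hratio)).congr' ?_
  filter_upwards [hratio.eventually_ne (div_pos hjj hjk).ne'] with n hn
  have hne := mul_ne_zero_iff.1 (div_ne_zero_iff.1 hn).2
  exact (eval_one_iterate_derivative_sobQ_div Ms hne.2 hne.1).symm

end

/-- limit of `Q_n^{(k)}(1)/(P_n^{(α,β)})^{(k)}(1)` when `γ < 2(α+2j+1)`. -/
theorem sobQ_deriv_ratio_small_gamma (α β : ℝ) (hα : -1 < α) (hβ : -1 < β) (j : ℕ)
    (γ M : ℝ) (hM : 0 < M) (Ms : ℕ → ℝ) (hMs : ∀ n, 0 ≤ Ms n)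
    (hlim : Filter.Tendsto (fun n : ℕ => Ms n * (n : ℝ) ^ γ) Filter.atTop (nhds M))
    (hγ : γ < 2 * (α + 2 * j + 1)) (k : ℕ) :
    Filter.Tendsto
      (fun n : ℕ => (Polynomial.derivative^[k] (sobQ α β j Ms n)).eval 1 /
        (Polynomial.derivative^[k] (jacobiP α β n)).eval 1)
      Filter.atTop (nhds (((k : ℝ) - j) / (α + j + k + 1))) :=
  sobQ_deriv_ratio_small_gamma_general hα hβ j (tendsto_mul_natCast_rpow_atTop hM hlim hγ) k
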